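/- arXiv:1707.02738 — 7 statements merged into one kernel-verified Lean document; each statement's English description precedes it below -/
import Mathlib

section
/- Let n ≥ 1, let G be a subgroup of GL(n,ℝ) which is connected in the subspace topology, and let X ⊆ GL(n,ℝ) be a Zariski closed set. If X ∩ G has nonempty interior in G, then every polynomial (in the n² matrix entries) that vanishes identically on X ∩ G vanishes identically on G; in particular G ⊆ X, so the Zariski closure of G is contained in X. -/
/-!
The idea is to study, for `g ∈ G`, the ideal `I g` of polynomials vanishing on some
neighbourhood of `g` in `G` (`germIdeal`).

By Hilbert's basis theorem `I 1` is finitely generated, so one neighbourhood of `1` works for all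
its elements at once, and `I 1 ≤ I h` for `h` close to `1`. Left translation by `g` is a polynomial
substitution, so `I g ≤ I (g * h)` for every `g ∈ G` and every `h` in a neighbourhood of `1` that
does not depend on `g` (`germIdeal_le_mul_right`).

For a fixed polynomial `p`, the set of `g` with `p ∈ I g` is open by definition. It is also closed:
if `g` is in its closure, then `p ∈ I x` for some `x` so close to `g` that `I x ≤ I g`, by the
uniformity just mentioned. Since `G` is connected, a polynomial vanishing on a nonempty open subset
of `G` vanishes on `G`. No closedness of `G`, hence no Lie group structure, is needed.
-/

open scoped MatrixGroups
open MvPolynomial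

/-- Evaluation of a polynomial in the matrix entries at an element of `GL n ℝ`. -/
noncomputable def evalGL {n : ℕ} (p : MvPolynomial (Fin n × Fin n) ℝ) (g : GL (Fin n) ℝ) : ℝ :=
  MvPolynomial.eval (fun ij : Fin n × Fin n => (g : Matrix (Fin n) (Fin n) ℝ) ij.1 ij.2) p

open Topology Filter

section

variable {n : ℕ}

/-- The substitution `p ↦ p (h * ·)` on polynomials in the matrix entries. -/
noncomputable def leftTranslate (h : GL (Fin n) ℝ) (p : MvPolynomial (Fin n × Fin n) ℝ) :
    MvPolynomial (Fin n × Fin n) ℝ :=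
  bind₁ (fun ij : Fin n × Fin n =>
    ∑ k, C ((h : Matrix (Fin n) (Fin n) ℝ) ij.1 k) * X (k, ij.2)) p

lemma evalGL_leftTranslate (h g : GL (Fin n) ℝ) (p : MvPolynomial (Fin n × Fin n) ℝ) :
    evalGL (leftTranslate h p) g = evalGL p (h * g) := by
  unfold evalGL leftTranslate
  rw [← MvPolynomial.coe_aeval_eq_eval, ← MvPolynomial.coe_aeval_eq_eval]
  simp only [RingHom.coe_coe, aeval_bind₁]
  congr 2
  ext ij
  simp [Matrix.mul_apply]

/-- The ideal of polynomials that vanish on some neighbourhood of `g` in `G`. -/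
def germIdeal (G : Subgroup (GL (Fin n) ℝ)) (g : G) : Ideal (MvPolynomial (Fin n × Fin n) ℝ) where
  carrier := {p | ∀ᶠ x : G in 𝓝 g, evalGL p x = 0}
  zero_mem' := by simp [evalGL]
  add_mem' := by
    intro p q hp hq
    filter_upwards [hp, hq] with x h1 h2
    simp_all [evalGL]
  smul_mem' := by
    intro c p hp
    filter_upwards [hp] with x h1
    simp_all [evalGL]

lemma mem_germIdeal {G : Subgroup (GL (Fin n) ℝ)} {g : G} {p : MvPolynomial (Fin n × Fin n) ℝ} :
    p ∈ germIdeal G g ↔ ∀ᶠ x : G in 𝓝 g, evalGL p x = 0 := Iff.rfl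

lemma leftTranslate_mem_germIdeal {G : Subgroup (GL (Fin n) ℝ)} (g x : G)
    (p : MvPolynomial (Fin n × Fin n) ℝ) :
    leftTranslate (g : GL (Fin n) ℝ) p ∈ germIdeal G x ↔ p ∈ germIdeal G (g * x) := by
  rw [mem_germIdeal, mem_germIdeal, ← map_mul_left_nhds, eventually_map]
  simp [evalGL_leftTranslate]

/-- Finite generation of `germIdeal G 1` makes the neighbourhood of `1` uniform in the polynomial,
and translation makes it uniform in `g`. -/
lemma germIdeal_le_mul_right (G : Subgroup (GL (Fin n) ℝ)) :
    ∀ᶠ h : G in 𝓝 1, ∀ g : G, germIdeal G g ≤ germIdeal G (g * h) := by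
  obtain ⟨s, hs⟩ := (isNoetherianRing_iff_ideal_fg _).1
    (inferInstance : IsNoetherianRing (MvPolynomial (Fin n × Fin n) ℝ)) (germIdeal G 1)
  have h1 : ∀ᶠ h : G in 𝓝 1, ∀ p ∈ s, p ∈ germIdeal G h := by
    rw [Filter.eventually_all_finset]
    intro p hp
    have hp' : p ∈ germIdeal G 1 := hs ▸ Ideal.subset_span hp
    exact eventually_eventually_nhds.2 hp'
  filter_upwards [h1] with h hh g p hp
  have hle : germIdeal G 1 ≤ germIdeal G h := hs ▸ Ideal.span_le.2 hh
  rw [← leftTranslate_mem_germIdeal]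
  apply hle
  rwa [leftTranslate_mem_germIdeal, mul_one]

lemma isClopen_mem_germIdeal (G : Subgroup (GL (Fin n) ℝ)) (p : MvPolynomial (Fin n × Fin n) ℝ) :
    IsClopen {g : G | p ∈ germIdeal G g} := by
  constructor
  · rw [← closure_subset_iff_isClosed]
    intro g hg
    -- `x⁻¹ * g` tends to `1` as `x` tends to `g`.
    have ht : Tendsto (fun x : G => x⁻¹ * g) (𝓝 g) (𝓝 1) := by
      have : Continuous fun x : G => x⁻¹ * g := by fun_prop
      simpa using this.tendsto g
    obtain ⟨x, hx, hle⟩ :=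
      ((mem_closure_iff_frequently.1 hg).and_eventually
        (ht.eventually (germIdeal_le_mul_right G))).exists
    simpa using hle x hx
  · exact isOpen_setOfPred_eventually_nhds

/-- The topology of `GL n ℝ` as a group of units is the one induced from matrix space, because
matrix inversion is continuous on invertible matrices. -/
lemma isEmbedding_GL_val :
    IsEmbedding (fun g : GL (Fin n) ℝ => (g : Matrix (Fin n) (Fin n) ℝ)) := by
  refine Units.isEmbedding_val_mk' (f := fun A => A⁻¹) ?_ (fun u => by simp)
  intro A hA
  have hd : A.det ≠ 0 := by
    simpa [isUnit_iff_ne_zero] using (Matrix.isUnit_iff_isUnit_det A).1 hA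
  have : ContinuousAt (fun B : Matrix (Fin n) (Fin n) ℝ => B⁻¹) A := by
    simp only [Matrix.inv_def, Ring.inverse_eq_inv']
    exact (continuous_id.matrix_det.continuousAt.inv₀ hd).smul
      continuous_id.matrix_adjugate.continuousAt
  exact this.continuousWithinAt

end

/-- Let `G ≤ GL(n,ℝ)` be connected (as a subset of matrix space with
the Euclidean topology) and let `X` be a Zariski closed subset of `GL(n,ℝ)`.  If `X ∩ G`
has nonempty interior in `G`, then every polynomial vanishing identically on `X ∩ G`
vanishes identically on `G`; in particular `G ⊆ X`. -/
theorem zariski_closure_in_closed_of_interior (n : ℕ) (hn : 1 ≤ n)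
    (G : Subgroup (GL (Fin n) ℝ))
    (hconn : IsConnected
      ((fun g : GL (Fin n) ℝ => (g : Matrix (Fin n) (Fin n) ℝ)) '' (G : Set (GL (Fin n) ℝ))))
    (X : Set (GL (Fin n) ℝ)) (S : Set (MvPolynomial (Fin n × Fin n) ℝ))
    (hX : X = {g : GL (Fin n) ℝ | ∀ p ∈ S, evalGL p g = 0})
    (hint : ∃ g ∈ X ∩ (G : Set (GL (Fin n) ℝ)), ∃ U : Set (Matrix (Fin n) (Fin n) ℝ),
      IsOpen U ∧ (g : Matrix (Fin n) (Fin n) ℝ) ∈ U ∧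
      ∀ h ∈ (G : Set (GL (Fin n) ℝ)), (h : Matrix (Fin n) (Fin n) ℝ) ∈ U → h ∈ X) :
    (∀ p : MvPolynomial (Fin n × Fin n) ℝ,
        (∀ g ∈ X ∩ (G : Set (GL (Fin n) ℝ)), evalGL p g = 0) →
        ∀ g ∈ (G : Set (GL (Fin n) ℝ)), evalGL p g = 0) ∧
      (G : Set (GL (Fin n) ℝ)) ⊆ X := by
  have : PreconnectedSpace G := by
    refine Subtype.preconnectedSpace (s := (G : Set (GL (Fin n) ℝ))) ?_
    exact isEmbedding_GL_val.isInducing.isPreconnected_image.1 hconn.isPreconnected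
  have key : ∀ p : MvPolynomial (Fin n × Fin n) ℝ,
      (∀ g ∈ X ∩ (G : Set (GL (Fin n) ℝ)), evalGL p g = 0) →
      ∀ g ∈ (G : Set (GL (Fin n) ℝ)), evalGL p g = 0 := by
    intro p hp g hg
    obtain ⟨g₀, ⟨-, hg₀⟩, U, hU, hgU, hUX⟩ := hint
    have hmem : p ∈ germIdeal G ⟨g₀, hg₀⟩ := by
      have hc : Continuous fun x : G => ((x : GL (Fin n) ℝ) : Matrix (Fin n) (Fin n) ℝ) :=
        Units.continuous_val.comp continuous_subtype_val
      filter_upwards [hc.continuousAt.preimage_mem_nhds (hU.mem_nhds hgU)] with x hx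
      exact hp x ⟨hUX x x.2 hx, x.2⟩
    have huniv := (isClopen_mem_germIdeal G p).eq_univ ⟨_, hmem⟩
    have hpg : (⟨g, hg⟩ : G) ∈ {g : G | p ∈ germIdeal G g} := huniv ▸ Set.mem_univ _
    exact (mem_germIdeal.1 hpg).self_of_nhds
  refine ⟨key, fun g hg => ?_⟩
  rw [hX]
  intro p hp
  refine key p (fun x hx => ?_) g hg
  have hxX := hx.1
  rw [hX] at hxX
  exact hxX p hp
end

section
/- Let n ≥ 1 and let G be a subgroup of GL(n,ℝ). Let Y be the set of all g ∈ GL(n,ℝ) such that every polynomial p ∈ MvPolynomial (Fin n × Fin n) ℝ which vanishes identically on some open neighbourhood of the identity in G also satisfies p(g) = 0. Then Y is a subgroup of GL(n,ℝ). -/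
/-!
Let `I` be the ideal of polynomials vanishing on a neighbourhood of `1` in `G`; the set in question
is the zero locus `Y` of `I` in `GL(n,ℝ)`. Since the polynomial ring is Noetherian, `I` is finitely
generated, so a single open neighbourhood `U` of `1` serves all `p ∈ I`
(`exists_uniform_nhds`).

*Products.* If `p ∈ I` and `g ∈ G ∩ U`, then `x ↦ p (x * g)` vanishes for `x ∈ G` near `1`, because
`x * g` stays in `G ∩ U`. It therefore lies in `I`, and `p (y * g) = 0` for every `y ∈ Y`. Thus, for
fixed `y ∈ Y`, the polynomial `x ↦ p (y * x)` vanishes on `G ∩ U`, so it lies in `I` and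
vanishes at every `z ∈ Y`.

*Inverses.* By Cramer's rule `det x ^ d * p (x⁻¹)` is a polynomial in `x` for large `d`
(`exists_inv_poly`). It lies in `I` when `p` does, since inversion is continuous at `1`, so it
vanishes at every `y ∈ Y`; as `det y ≠ 0`, this gives `p (y⁻¹) = 0`.
-/

open scoped MatrixGroups
open MvPolynomial

open Topology

namespace GermVanishing

variable {n : ℕ}

/-- The polynomial `p` vanishes on some neighbourhood of the identity in `G`; phrased through the
neighbourhood filter of `1` in the space of all matrices. -/
def Vanishes (G : Subgroup (GL (Fin n) ℝ)) (p : MvPolynomial (Fin n × Fin n) ℝ) : Prop :=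
  ∀ᶠ x in 𝓝 (1 : Matrix (Fin n) (Fin n) ℝ),
    ∀ h ∈ G, (h : Matrix (Fin n) (Fin n) ℝ) = x → evalGL p h = 0

lemma vanishes_iff (G : Subgroup (GL (Fin n) ℝ)) (p : MvPolynomial (Fin n × Fin n) ℝ) :
    Vanishes G p ↔ ∃ U : Set (Matrix (Fin n) (Fin n) ℝ), IsOpen U ∧
      ((1 : GL (Fin n) ℝ) : Matrix (Fin n) (Fin n) ℝ) ∈ U ∧
      ∀ h ∈ (G : Set (GL (Fin n) ℝ)), (h : Matrix (Fin n) (Fin n) ℝ) ∈ U → evalGL p h = 0 := by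
  unfold Vanishes
  rw [eventually_nhds_iff]
  constructor
  · rintro ⟨U, hU, ho, h1⟩
    exact ⟨U, ho, by simpa using h1, fun h hh hx => hU _ hx h hh rfl⟩
  · rintro ⟨U, ho, h1, hU⟩
    exact ⟨U, fun x hx h hh e => hU h hh (e ▸ hx), ho, by simpa using h1⟩

/-- The ideal of polynomials vanishing on a neighbourhood of the identity in `G`. -/
def germIdeal (G : Subgroup (GL (Fin n) ℝ)) : Ideal (MvPolynomial (Fin n × Fin n) ℝ) where
  carrier := {p | Vanishes G p}
  zero_mem' := Filter.Eventually.of_forall fun x h _ _ => by simp [evalGL]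
  add_mem' := by
    intro p q hp hq
    filter_upwards [hp, hq] with x hx hx' h hh e
    have h1 := hx h hh e
    have h2 := hx' h hh e
    simp only [evalGL, map_add] at *
    rw [h1, h2, add_zero]
  smul_mem' := by
    intro c p hp
    filter_upwards [hp] with x hx h hh e
    have h1 := hx h hh e
    simp only [evalGL, smul_eq_mul, map_mul] at *
    rw [h1, mul_zero]

lemma mem_germIdeal {G : Subgroup (GL (Fin n) ℝ)} {p : MvPolynomial (Fin n × Fin n) ℝ} :
    p ∈ germIdeal G ↔ Vanishes G p := Iff.rfl

/-- By Hilbert's basis theorem, one neighbourhood works for all the polynomials of `germIdeal G`. -/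
lemma exists_uniform_nhds (G : Subgroup (GL (Fin n) ℝ)) :
    ∃ U : Set (Matrix (Fin n) (Fin n) ℝ), IsOpen U ∧ 1 ∈ U ∧
      ∀ p, Vanishes G p → ∀ h ∈ G, (h : Matrix (Fin n) (Fin n) ℝ) ∈ U → evalGL p h = 0 := by
  obtain ⟨S, hS⟩ := (isNoetherianRing_iff_ideal_fg _).1 inferInstance (germIdeal G)
  have hev : ∀ᶠ x in 𝓝 (1 : Matrix (Fin n) (Fin n) ℝ), ∀ p ∈ S,
      ∀ h ∈ G, (h : Matrix (Fin n) (Fin n) ℝ) = x → evalGL p h = 0 := by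
    rw [Filter.eventually_all_finset]
    intro p hp
    exact mem_germIdeal.1 (hS ▸ Ideal.subset_span hp)
  obtain ⟨U, hU, ho, h1⟩ := eventually_nhds_iff.1 hev
  refine ⟨U, ho, h1, fun p hp h hh hx => ?_⟩
  have hle : germIdeal G ≤ RingHom.ker (MvPolynomial.eval
      (fun ij : Fin n × Fin n => (h : Matrix (Fin n) (Fin n) ℝ) ij.1 ij.2)) := by
    rw [← hS, Ideal.span_le]
    exact fun q hq => hU _ hx q hq h hh rfl
  exact hle hp

lemma exists_mul_right_poly (p : MvPolynomial (Fin n × Fin n) ℝ) (g : GL (Fin n) ℝ) :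
    ∃ q, ∀ x : GL (Fin n) ℝ, evalGL q x = evalGL p (x * g) := by
  refine ⟨bind₁ (fun ij => ∑ k, X (ij.1, k) * C ((g : Matrix (Fin n) (Fin n) ℝ) k ij.2)) p,
    fun x => ?_⟩
  simp only [evalGL, eval, eval₂Hom_bind₁]
  congr 2
  ext ij
  simp [Matrix.mul_apply]

lemma exists_mul_left_poly (p : MvPolynomial (Fin n × Fin n) ℝ) (g : GL (Fin n) ℝ) :
    ∃ q, ∀ x : GL (Fin n) ℝ, evalGL q x = evalGL p (g * x) := by
  refine ⟨bind₁ (fun ij => ∑ k, C ((g : Matrix (Fin n) (Fin n) ℝ) ij.1 k) * X (k, ij.2)) p,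
    fun x => ?_⟩
  simp only [evalGL, eval, eval₂Hom_bind₁]
  congr 2
  ext ij
  simp [Matrix.mul_apply]

lemma mapMatrix_eval (x : Matrix (Fin n) (Fin n) ℝ) :
    (MvPolynomial.eval (fun ij : Fin n × Fin n => x ij.1 ij.2)).mapMatrix
      (Matrix.mvPolynomialX (Fin n) (Fin n) ℝ) = x := by
  ext i j
  simp [Matrix.mvPolynomialX]

lemma evalGL_det (x : GL (Fin n) ℝ) :
    evalGL (Matrix.mvPolynomialX (Fin n) (Fin n) ℝ).det x
      = (x : Matrix (Fin n) (Fin n) ℝ).det := by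
  rw [evalGL, RingHom.map_det, mapMatrix_eval]

lemma evalGL_adjugate (x : GL (Fin n) ℝ) (i j : Fin n) :
    evalGL ((Matrix.mvPolynomialX (Fin n) (Fin n) ℝ).adjugate i j) x
      = (x : Matrix (Fin n) (Fin n) ℝ).adjugate i j := by
  have h := RingHom.map_adjugate (MvPolynomial.eval
    (fun ij : Fin n × Fin n => (x : Matrix (Fin n) (Fin n) ℝ) ij.1 ij.2))
    (Matrix.mvPolynomialX (Fin n) (Fin n) ℝ)
  rw [mapMatrix_eval] at h
  exact congrFun (congrFun h i) j

lemma det_coe_ne_zero (x : GL (Fin n) ℝ) : (x : Matrix (Fin n) (Fin n) ℝ).det ≠ 0 :=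
  ((Matrix.isUnit_iff_isUnit_det _).1 x.isUnit).ne_zero

lemma coe_inv_eq (x : GL (Fin n) ℝ) : ((x⁻¹ : GL (Fin n) ℝ) : Matrix (Fin n) (Fin n) ℝ)
    = (x : Matrix (Fin n) (Fin n) ℝ).det⁻¹ • (x : Matrix (Fin n) (Fin n) ℝ).adjugate := by
  rw [Matrix.coe_units_inv, Matrix.inv_def, Ring.inverse_eq_inv']

/-- Clearing denominators in `p (x⁻¹)` by means of Cramer's rule. -/
lemma exists_inv_poly (p : MvPolynomial (Fin n × Fin n) ℝ) :
    ∃ (q : MvPolynomial (Fin n × Fin n) ℝ) (d : ℕ), ∀ x : GL (Fin n) ℝ,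
      evalGL q x = (x : Matrix (Fin n) (Fin n) ℝ).det ^ d * evalGL p x⁻¹ := by
  induction p using MvPolynomial.induction_on with
  | C a => exact ⟨C a, 0, fun x => by simp [evalGL]⟩
  | add p₁ p₂ h₁ h₂ =>
    obtain ⟨q₁, d₁, h₁⟩ := h₁
    obtain ⟨q₂, d₂, h₂⟩ := h₂
    refine ⟨q₁ * (Matrix.mvPolynomialX (Fin n) (Fin n) ℝ).det ^ d₂
      + q₂ * (Matrix.mvPolynomialX (Fin n) (Fin n) ℝ).det ^ d₁, d₁ + d₂, fun x => ?_⟩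
    have e₁ := h₁ x
    have e₂ := h₂ x
    have e₃ := evalGL_det x
    simp only [evalGL, map_add, map_mul, map_pow] at *
    rw [e₁, e₂, e₃]
    ring
  | mul_X p ij h =>
    obtain ⟨q, d, h⟩ := h
    refine ⟨q * (Matrix.mvPolynomialX (Fin n) (Fin n) ℝ).adjugate ij.1 ij.2, d + 1, fun x => ?_⟩
    have e₁ := h x
    have e₂ := evalGL_adjugate x ij.1 ij.2
    have e₃ : (x : Matrix (Fin n) (Fin n) ℝ).adjugate ij.1 ij.2 =
        (x : Matrix (Fin n) (Fin n) ℝ).det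
          * ((x⁻¹ : GL (Fin n) ℝ) : Matrix (Fin n) (Fin n) ℝ) ij.1 ij.2 := by
      rw [coe_inv_eq, Matrix.smul_apply, smul_eq_mul, mul_inv_cancel_left₀ (det_coe_ne_zero x)]
    simp only [evalGL, map_mul, eval_X] at *
    rw [e₁, e₂, e₃]
    ring

/-- The zero locus of `germIdeal G` in `GL(n,ℝ)`, as a subgroup. -/
def locus (G : Subgroup (GL (Fin n) ℝ)) : Subgroup (GL (Fin n) ℝ) where
  carrier := {g | ∀ p, Vanishes G p → evalGL p g = 0}
  one_mem' := fun p hp => hp.self_of_nhds 1 G.one_mem rfl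
  mul_mem' := by
    intro y z hy hz p hp
    obtain ⟨U, ho, h1, hU⟩ := exists_uniform_nhds G
    obtain ⟨q, hq⟩ := exists_mul_left_poly p y
    rw [← hq]
    refine hz q ?_
    filter_upwards [ho.mem_nhds h1] with x hx g hg e
    rw [hq]
    obtain ⟨r, hr⟩ := exists_mul_right_poly p g
    rw [← hr]
    refine hy r ?_
    have hc : Continuous fun a : Matrix (Fin n) (Fin n) ℝ =>
        a * (g : Matrix (Fin n) (Fin n) ℝ) := by fun_prop
    filter_upwards [(ho.preimage hc).mem_nhds (by simpa [e] using hx)] with a ha h hh e'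
    rw [hr]
    refine hU p hp _ (G.mul_mem hh hg) ?_
    simpa [e'] using ha
  inv_mem' := by
    intro y hy p hp
    obtain ⟨q, d, hq⟩ := exists_inv_poly p
    have hv : Vanishes G q := by
      have hc : Filter.Tendsto (fun a : Matrix (Fin n) (Fin n) ℝ => a.det⁻¹ • a.adjugate)
          (𝓝 1) (𝓝 1) := by
        have h : ContinuousAt (fun a : Matrix (Fin n) (Fin n) ℝ => a.det⁻¹ • a.adjugate) 1 := by
          have hdet : ContinuousAt (fun a : Matrix (Fin n) (Fin n) ℝ => a.det) 1 :=
            continuous_id.matrix_det.continuousAt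
          exact (hdet.inv₀ (by simp)).smul continuous_id.matrix_adjugate.continuousAt
        simpa [ContinuousAt] using h
      filter_upwards [hc.eventually hp] with a ha h hh e
      rw [hq, ha h⁻¹ (G.inv_mem hh) (by rw [coe_inv_eq, e]), mul_zero]
    have h0 := hy q hv
    rw [hq] at h0
    exact (mul_eq_zero.1 h0).resolve_left (pow_ne_zero _ (det_coe_ne_zero y))

end GermVanishing

/-- For a subgroup `G ≤ GL(n,ℝ)`, the set `Y` of all `g ∈ GL(n,ℝ)` at which
every polynomial vanishing identically on some open neighbourhood of the identity in `G`
(with the subspace topology induced from matrix space) vanishes, is a subgroup of `GL(n,ℝ)`. -/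
theorem germ_vanishing_locus_is_subgroup (n : ℕ) (hn : 1 ≤ n)
    (G : Subgroup (GL (Fin n) ℝ)) :
    ∃ H : Subgroup (GL (Fin n) ℝ), (H : Set (GL (Fin n) ℝ)) =
      {g : GL (Fin n) ℝ | ∀ p : MvPolynomial (Fin n × Fin n) ℝ,
        (∃ U : Set (Matrix (Fin n) (Fin n) ℝ), IsOpen U ∧
            ((1 : GL (Fin n) ℝ) : Matrix (Fin n) (Fin n) ℝ) ∈ U ∧
            ∀ h ∈ (G : Set (GL (Fin n) ℝ)), (h : Matrix (Fin n) (Fin n) ℝ) ∈ U → evalGL p h = 0) →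
        evalGL p g = 0} := by
  refine ⟨GermVanishing.locus G, ?_⟩
  ext g
  exact forall_congr' fun p => imp_congr (GermVanishing.vanishes_iff G p) Iff.rfl
end

section
/- Let N ≥ 1, let A ⊆ ℝ^N be any subset, and let a ∈ A. Then there exists an open neighbourhood U₀ of a in A (in the subspace topology) such that every polynomial in N variables over ℝ which vanishes identically on some open neighbourhood of a in A vanishes identically on U₀. -/
/-! The polynomials vanishing on some neighbourhood of `a` in `A` form an ideal. By Hilbert's basis
theorem it has a finite generating set; on the intersection of the finitely many neighbourhoods
belonging to the generators, all generators vanish, and hence so does the whole ideal. -/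

/-- The ideal of polynomials whose germ at `a` along `A` is zero, i.e. which vanish on some
neighbourhood of `a` in `A`. -/
def germVanishingIdeal {N : ℕ} (A : Set (Fin N → ℝ)) (a : Fin N → ℝ) :
    Ideal (MvPolynomial (Fin N) ℝ) where
  carrier := {p | ∀ᶠ x in nhdsWithin a A, MvPolynomial.eval x p = 0}
  add_mem' := by
    intro p q hp hq
    rw [Set.mem_ofPred_eq] at *
    filter_upwards [hp, hq] with x h₁ h₂
    simp [h₁, h₂]
  zero_mem' := by simp
  smul_mem' := by
    intro c p hp
    rw [Set.mem_ofPred_eq] at *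
    filter_upwards [hp] with x h
    simp [h]

/-- For any subset `A ⊆ ℝ^N` and any `a ∈ A` there is an open neighbourhood
`U₀` of `a` in `A` such that every polynomial which vanishes identically on some open
neighbourhood of `a` in `A` vanishes identically on `U₀ ∩ A`. -/
theorem vanishing_ideal_stabilizes (N : ℕ) (hN : 1 ≤ N)
    (A : Set (Fin N → ℝ)) (a : Fin N → ℝ) (ha : a ∈ A) :
    ∃ U₀ : Set (Fin N → ℝ), IsOpen U₀ ∧ a ∈ U₀ ∧
      ∀ p : MvPolynomial (Fin N) ℝ,
        (∃ U : Set (Fin N → ℝ), IsOpen U ∧ a ∈ U ∧ ∀ x ∈ U ∩ A, MvPolynomial.eval x p = 0) →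
        ∀ x ∈ U₀ ∩ A, MvPolynomial.eval x p = 0 := by
  obtain ⟨S, hS⟩ := IsNoetherian.noetherian (germVanishingIdeal A a)
  have hS' : ∀ᶠ x in nhdsWithin a A, ∀ p ∈ S, MvPolynomial.eval x p = 0 := by
    refine (Filter.eventually_all_finset S).2 fun p hp => ?_
    have hmem : p ∈ germVanishingIdeal A a := hS ▸ Submodule.subset_span hp
    exact hmem
  obtain ⟨U₀, hU₀, haU₀, hvan⟩ := mem_nhdsWithin.1 hS'
  refine ⟨U₀, hU₀, haU₀, ?_⟩
  rintro p ⟨U, hU, haU, hp⟩ x hx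
  have hmem : p ∈ germVanishingIdeal A a := mem_nhdsWithin.2 ⟨U, hU, haU, hp⟩
  have hle : Ideal.span (S : Set (MvPolynomial (Fin N) ℝ)) ≤
      RingHom.ker (MvPolynomial.eval x) :=
    Ideal.span_le.2 fun q hq => hvan hx q hq
  exact hle (hS.symm ▸ hmem : p ∈ Submodule.span _ (S : Set (MvPolynomial (Fin N) ℝ)))
end

section
/- Let K be an algebraically closed field of characteristic 0, 𝔤 a finite-dimensional Lie algebra over K, and e : 𝔤 → 𝔤 a Lie algebra automorphism. Suppose the generalized eigenspace 𝔤¹(e) of e for the eigenvalue 1 is the underlying subspace of a Cartan subalgebra 𝔥 of 𝔤. Then e fixes every root of (𝔤,𝔥): for every root λ of (𝔤,𝔥) and every Z ∈ 𝔥 one has λ(e(Z)) = λ(Z). (Note e(𝔥) = 𝔥, so λ∘e|_𝔥 makes sense.) -/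
/-!
The proof restricts attention to one `Z ∈ 𝔥` at a time. Since `e` is an automorphism, `ad (e^m Z)`
is conjugate to `ad Z`, so the numbers `λ(e^m Z)`, `m ∈ ℕ`, are all eigenvalues of `ad Z` and take
only finitely many values (`finite_range_root_pow`). On the other hand `λ` is linear, because `𝔥` is
nilpotent and `K` has characteristic zero, and `N = e - 1` is locally nilpotent on `𝔥`. Inducting on
the nilpotency order of `Z`, one may assume `λ(N (N Z)) = 0` and likewise along the `e`-orbit, so
that `λ(e^m Z) = λ(Z) + m λ(N Z)`. An arithmetic progression in characteristic zero with finitely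
many values is constant, hence `λ(N Z) = 0`.
-/

/-- The generalized root space of a function `lam : 𝔥 → K` relative to a Lie subalgebra
`𝔥` of `𝔤` (for the adjoint action): all `X ∈ 𝔤` such that for every `Z ∈ 𝔥` some power
of `ad(Z) - lam(Z)·id` kills `X`. -/
def genRootSpace {K 𝔤 : Type*} [Field K] [LieRing 𝔤] [LieAlgebra K 𝔤]
    (𝔥 : LieSubalgebra K 𝔤) (lam : 𝔥 → K) : Set 𝔤 :=
  {X | ∀ Z : 𝔥, ∃ k : ℕ,
    ((LieAlgebra.ad K 𝔤 (Z : 𝔤) - lam Z • (1 : Module.End K 𝔤)) ^ k) X = 0}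

/-- A root is a linear functional: it is a weight of the nilpotent Lie algebra `𝔥` acting on `𝔤`,
and weights are linear in characteristic zero. -/
lemma exists_linear_of_root {K 𝔤 : Type*} [Field K] [IsAlgClosed K] [CharZero K]
    [LieRing 𝔤] [LieAlgebra K 𝔤] [Module.Finite K 𝔤]
    (𝔥 : LieSubalgebra K 𝔤) [𝔥.IsCartanSubalgebra]
    (lam : 𝔥 → K) (hlam : ∃ X : 𝔤, X ≠ 0 ∧ X ∈ genRootSpace 𝔥 lam) :
    ∃ l : 𝔥 →ₗ[K] K, ∀ Z, l Z = lam Z := by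
  obtain ⟨X, hX0, hX⟩ := hlam
  have hmem : X ∈ LieModule.genWeightSpace 𝔤 lam := by
    rw [LieModule.mem_genWeightSpace]
    exact hX
  let χ : LieModule.Weight K 𝔥 𝔤 :=
    ⟨lam, fun h => hX0 (by simpa [h] using hmem)⟩
  exact ⟨χ.toLinear, fun _ => rfl⟩

lemma hasEigenvalue_of_root {K 𝔤 : Type*} [Field K] [LieRing 𝔤] [LieAlgebra K 𝔤]
    (𝔥 : LieSubalgebra K 𝔤)
    (lam : 𝔥 → K) (hlam : ∃ X : 𝔤, X ≠ 0 ∧ X ∈ genRootSpace 𝔥 lam) (Z : 𝔥) :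
    (LieAlgebra.ad K 𝔤 (Z : 𝔤)).HasEigenvalue (lam Z) := by
  obtain ⟨X, hX0, hX⟩ := hlam
  obtain ⟨k, hk⟩ := hX Z
  refine Module.End.hasEigenvalue_of_hasGenEigenvalue (k := k) fun h => hX0 ?_
  have : X ∈ Module.End.genEigenspace (LieAlgebra.ad K 𝔤 (Z : 𝔤)) (lam Z) k := by
    rw [Module.End.mem_genEigenspace_nat]
    exact hk
  simpa [h] using this

/-- Transport of an eigenvector of `ad (e z)` along `e⁻¹`. -/
lemma hasEigenvalue_ad_of_map {K 𝔤 : Type*} [Field K] [LieRing 𝔤] [LieAlgebra K 𝔤]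
    (e : 𝔤 ≃ₗ[K] 𝔤) (hbr : ∀ x y : 𝔤, e ⁅x, y⁆ = ⁅e x, e y⁆) (z : 𝔤) (μ : K)
    (h : (LieAlgebra.ad K 𝔤 (e z)).HasEigenvalue μ) :
    (LieAlgebra.ad K 𝔤 z).HasEigenvalue μ := by
  obtain ⟨v, hv⟩ := h.exists_hasEigenvector
  have hv1 : ⁅e z, v⁆ = μ • v := hv.apply_eq_smul
  refine Module.End.hasEigenvalue_of_hasEigenvector (x := e.symm v)
    (Module.End.hasEigenvector_iff.2 ⟨Module.End.mem_eigenspace_iff.2 (e.injective ?_), ?_⟩)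
  · simp [hbr, hv1]
  · simpa using hv.2

/-- All values of a root along the orbit of `Z` are eigenvalues of the single endomorphism `ad Z`.
The orbit is described by the restriction `E` of `e` to `𝔥`. -/
lemma finite_range_root_pow {K 𝔤 : Type*} [Field K] [LieRing 𝔤] [LieAlgebra K 𝔤]
    [Module.Finite K 𝔤]
    (e : 𝔤 ≃ₗ[K] 𝔤) (hbr : ∀ x y : 𝔤, e ⁅x, y⁆ = ⁅e x, e y⁆) (𝔥 : LieSubalgebra K 𝔤)
    (lam : 𝔥 → K) (hlam : ∃ X : 𝔤, X ≠ 0 ∧ X ∈ genRootSpace 𝔥 lam)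
    (E : Module.End K 𝔥) (hE : ∀ Z : 𝔥, (E Z : 𝔤) = e Z) (Z : 𝔥) :
    (Set.range fun m : ℕ => lam ((E ^ m) Z)).Finite := by
  have key : ∀ (m : ℕ) (μ : K), (LieAlgebra.ad K 𝔤 ((E ^ m) Z : 𝔤)).HasEigenvalue μ →
      (LieAlgebra.ad K 𝔤 (Z : 𝔤)).HasEigenvalue μ := by
    intro m μ
    induction m with
    | zero => exact id
    | succ m ih =>
      intro h
      rw [pow_succ', Module.End.mul_apply, hE] at h
      exact ih (hasEigenvalue_ad_of_map e hbr _ μ h)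
  refine (Module.End.finite_hasEigenvalue (LieAlgebra.ad K 𝔤 (Z : 𝔤))).subset ?_
  rintro _ ⟨m, rfl⟩
  exact key m _ (hasEigenvalue_of_root 𝔥 lam hlam _)

/-- A linear functional whose values along each orbit of `E` form a finite set is invariant under
`E` on vectors killed by a power of `E - 1`. -/
lemma map_sub_eq_zero_of_finite_range {K V : Type*} [Field K] [CharZero K] [AddCommGroup V]
    [Module K V] (E : Module.End K V) (l : V →ₗ[K] K)
    (hfin : ∀ v, (Set.range fun m : ℕ => l ((E ^ m) v)).Finite) (k : ℕ) :
    ∀ v, ((E - 1) ^ k) v = 0 → l ((E - 1) v) = 0 := by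
  induction k with
  | zero =>
    intro v hv
    have : v = 0 := by simpa using hv
    simp [this]
  | succ k ih =>
    intro v hv
    have hcomm (m : ℕ) (j : ℕ) : Commute (E ^ m) ((E - 1) ^ j) :=
      ((Commute.refl E).sub_right (Commute.one_right E)).pow_pow m j
    -- the induction hypothesis applies to every `E ^ m ((E - 1) v)`
    have horb : ∀ m : ℕ, l ((E ^ m) ((E - 1) v)) = l ((E - 1) v) := by
      intro m
      induction m with
      | zero => simp
      | succ m ihm =>
        have h0 : ((E - 1) ^ k) ((E ^ m) ((E - 1) v)) = 0 := by
          rw [← Module.End.mul_apply, ← (hcomm m k).eq, Module.End.mul_apply,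
            ← Module.End.mul_apply ((E - 1) ^ k), ← pow_succ, hv, map_zero]
        have h1 := ih _ h0
        rw [LinearMap.sub_apply, map_sub, Module.End.one_apply, sub_eq_zero,
          ← Module.End.mul_apply, ← pow_succ'] at h1
        rw [h1, ihm]
    have harith : ∀ m : ℕ, l ((E ^ m) v) = l v + m * l ((E - 1) v) := by
      intro m
      induction m with
      | zero => simp
      | succ m ihm =>
        have h1 := horb m
        have h2 : l ((E ^ m) ((E - 1) v)) = l ((E ^ (m + 1)) v) - l ((E ^ m) v) := by
          simp [pow_succ]
        push_cast
        linear_combination h1 - h2 + ihm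
    by_contra hne
    refine Set.infinite_range_of_injective (f := fun m : ℕ => l ((E ^ m) v)) ?_ (hfin v)
    intro a b hab
    simpa only [harith, add_right_inj, mul_eq_mul_right_iff, hne, or_false, Nat.cast_inj] using hab

/-- Let `K` be algebraically closed of characteristic `0`, `𝔤` a
finite-dimensional Lie algebra over `K`, and `e` an automorphism of `𝔤` whose generalized
eigenspace for the eigenvalue `1` is the underlying subspace of a Cartan subalgebra `𝔥`.
Then `e` fixes every root of `(𝔤,𝔥)`: `λ(e(Z)) = λ(Z)` for each root `λ` and `Z ∈ 𝔥`. -/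
theorem automorphism_fixes_roots {K 𝔤 : Type*} [Field K] [IsAlgClosed K] [CharZero K]
    [LieRing 𝔤] [LieAlgebra K 𝔤] [Module.Finite K 𝔤]
    (e : 𝔤 ≃ₗ[K] 𝔤) (hbr : ∀ x y : 𝔤, e ⁅x, y⁆ = ⁅e x, e y⁆)
    (𝔥 : LieSubalgebra K 𝔤) [𝔥.IsCartanSubalgebra]
    (h𝔥 : 𝔥.toSubmodule = Module.End.maxGenEigenspace (e : 𝔤 →ₗ[K] 𝔤) 1)
    (lam : 𝔥 → K) (hlam : ∃ X : 𝔤, X ≠ 0 ∧ X ∈ genRootSpace 𝔥 lam) :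
    ∀ (Z : 𝔥) (hz : e (Z : 𝔤) ∈ 𝔥), lam ⟨e (Z : 𝔤), hz⟩ = lam Z := by
  intro Z hz
  have hmap : ∀ x ∈ 𝔥.toSubmodule, (e : 𝔤 →ₗ[K] 𝔤) x ∈ 𝔥.toSubmodule := by
    rw [h𝔥]
    exact Module.End.mapsTo_maxGenEigenspace_of_comm (Commute.refl _) 1
  let E : Module.End K 𝔥 := (e : 𝔤 →ₗ[K] 𝔤).restrict hmap
  have hE : ∀ W : 𝔥, (E W : 𝔤) = e W := fun _ => rfl
  obtain ⟨l, hl⟩ := exists_linear_of_root 𝔥 lam hlam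
  have hZ : (Z : 𝔤) ∈ Module.End.maxGenEigenspace (e : 𝔤 →ₗ[K] 𝔤) 1 := h𝔥 ▸ Z.2
  rw [Module.End.mem_maxGenEigenspace] at hZ
  obtain ⟨k, hk⟩ := hZ
  rw [one_smul] at hk
  have hpow : ∀ j : ℕ, ((((E - 1) ^ j) Z : 𝔥) : 𝔤) = (((e : 𝔤 →ₗ[K] 𝔤) - 1) ^ j) (Z : 𝔤) := by
    intro j
    induction j with
    | zero => rfl
    | succ j ih =>
      rw [pow_succ', pow_succ', Module.End.mul_apply, Module.End.mul_apply, ← ih]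
      rfl
  have h0 : ((E - 1) ^ k) Z = 0 := Subtype.ext ((hpow k).trans hk)
  have hfin : ∀ v, (Set.range fun m : ℕ => l ((E ^ m) v)).Finite := by
    simpa only [hl] using finite_range_root_pow e hbr 𝔥 lam hlam E hE
  have h1 := map_sub_eq_zero_of_finite_range E l hfin k Z h0
  rw [LinearMap.sub_apply, Module.End.one_apply, map_sub, sub_eq_zero, hl, hl] at h1
  exact h1
end

section
/- Let K be a field, 𝔤 a Lie algebra over K, and e : 𝔤 → 𝔤 a Lie algebra automorphism. Then for all a, b ∈ K the bracket of generalized eigenspaces satisfies ⁅𝔤^a(e), 𝔤^b(e)⁆ ⊆ 𝔤^{ab}(e). In particular, the generalized eigenspace 𝔤¹(e) of e for the eigenvalue 1 is a Lie subalgebra of 𝔤. -/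
/-!
Write `ν_c = e - c`. Since `e` preserves the bracket, expanding `⁅e x, e y⁆` with
`e x = ν_a x + a x` and `e y = ν_b y + b y` gives the twisted Leibniz rule
`ν_{ab} ⁅x, y⁆ = ⁅ν_a x, ν_b y⁆ + b ⁅ν_a x, y⁆ + a ⁅x, ν_b y⁆`.
Each term on the right has a smaller total order of nilpotency than `⁅x, y⁆`, so if `ν_a ^ k`
kills `x` and `ν_b ^ l` kills `y`, then `ν_{ab} ^ (k + l)` kills `⁅x, y⁆`. For `a = b = 1` this is
closure of the generalized eigenspace under the bracket.
-/

/-- Twisted Leibniz rule for a bracket-preserving endomorphism. -/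
lemma sub_smul_lie_eq {K 𝔤 : Type*} [Field K] [LieRing 𝔤] [LieAlgebra K 𝔤]
    (f : Module.End K 𝔤) (hf : ∀ x y : 𝔤, f ⁅x, y⁆ = ⁅f x, f y⁆) (a b : K) (x y : 𝔤) :
    (f - (a * b) • (1 : Module.End K 𝔤)) ⁅x, y⁆ =
      ⁅(f - a • (1 : Module.End K 𝔤)) x, (f - b • (1 : Module.End K 𝔤)) y⁆
        + b • ⁅(f - a • (1 : Module.End K 𝔤)) x, y⁆
        + a • ⁅x, (f - b • (1 : Module.End K 𝔤)) y⁆ := by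
  simp only [LinearMap.sub_apply, LinearMap.smul_apply, Module.End.one_apply, hf, lie_sub,
    sub_lie, lie_smul, smul_lie, smul_sub, smul_smul, mul_comm b a]
  abel

/-- The orders of nilpotency add under the bracket; the slack `k + l ≤ n` lets one induction on `n`
treat all three terms of the twisted Leibniz rule. -/
lemma pow_sub_smul_lie_eq_zero {K 𝔤 : Type*} [Field K] [LieRing 𝔤] [LieAlgebra K 𝔤]
    (f : Module.End K 𝔤) (hf : ∀ x y : 𝔤, f ⁅x, y⁆ = ⁅f x, f y⁆) (a b : K) (n : ℕ) :
    ∀ (k l : ℕ) (x y : 𝔤), k + l ≤ n →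
      ((f - a • (1 : Module.End K 𝔤)) ^ k) x = 0 →
      ((f - b • (1 : Module.End K 𝔤)) ^ l) y = 0 →
      ((f - (a * b) • (1 : Module.End K 𝔤)) ^ n) ⁅x, y⁆ = 0 := by
  induction n with
  | zero =>
    intro k l x y h hx hy
    obtain rfl : k = 0 := by omega
    have hx0 : x = 0 := by simpa using hx
    simp [hx0]
  | succ n ih =>
    intro k l x y h hx hy
    rcases k with _ | k
    · have hx0 : x = 0 := by simpa using hx
      simp [hx0]
    rcases l with _ | l
    · have hy0 : y = 0 := by simpa using hy
      simp [hy0]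
    have hx' := hx
    have hy' := hy
    rw [pow_succ, Module.End.mul_apply] at hx' hy'
    rw [pow_succ, Module.End.mul_apply, sub_smul_lie_eq f hf, map_add, map_add, map_smul, map_smul,
      ih k l _ _ (by omega) hx' hy', ih k (l + 1) _ _ (by omega) hx' hy,
      ih (k + 1) l _ _ (by omega) hx hy']
    simp

/-- For an automorphism `e` of a Lie algebra `𝔤` over a field `K` and
`a b ∈ K`, the bracket of generalized eigenspaces satisfies
`⁅𝔤^a(e), 𝔤^b(e)⁆ ⊆ 𝔤^{ab}(e)`; in particular `𝔤¹(e)` is a Lie subalgebra of `𝔤`. -/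
theorem bracket_maxGenEigenspace_le {K 𝔤 : Type*} [Field K] [LieRing 𝔤] [LieAlgebra K 𝔤]
    (e : 𝔤 ≃ₗ[K] 𝔤) (hbr : ∀ x y : 𝔤, e ⁅x, y⁆ = ⁅e x, e y⁆) :
    (∀ a b : K,
      Submodule.span K {z : 𝔤 | ∃ x ∈ Module.End.maxGenEigenspace (e : 𝔤 →ₗ[K] 𝔤) a,
          ∃ y ∈ Module.End.maxGenEigenspace (e : 𝔤 →ₗ[K] 𝔤) b, z = ⁅x, y⁆} ≤
        Module.End.maxGenEigenspace (e : 𝔤 →ₗ[K] 𝔤) (a * b)) ∧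
    ∃ 𝔥 : LieSubalgebra K 𝔤,
      𝔥.toSubmodule = Module.End.maxGenEigenspace (e : 𝔤 →ₗ[K] 𝔤) 1 := by
  have key : ∀ a b : K, ∀ x ∈ Module.End.maxGenEigenspace (e : 𝔤 →ₗ[K] 𝔤) a,
      ∀ y ∈ Module.End.maxGenEigenspace (e : 𝔤 →ₗ[K] 𝔤) b,
      ⁅x, y⁆ ∈ Module.End.maxGenEigenspace (e : 𝔤 →ₗ[K] 𝔤) (a * b) := by
    intro a b x hx y hy
    rw [Module.End.mem_maxGenEigenspace] at hx hy ⊢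
    obtain ⟨k, hk⟩ := hx
    obtain ⟨l, hl⟩ := hy
    exact ⟨k + l, pow_sub_smul_lie_eq_zero (e : 𝔤 →ₗ[K] 𝔤) hbr a b (k + l) k l x y le_rfl hk hl⟩
  refine ⟨fun a b => Submodule.span_le.2 ?_, ?_⟩
  · rintro z ⟨x, hx, y, hy, rfl⟩
    exact key a b x hx y hy
  · refine ⟨{ Module.End.maxGenEigenspace (e : 𝔤 →ₗ[K] 𝔤) 1 with
      lie_mem' := fun {x y} hx hy => ?_ }, rfl⟩
    have h := key 1 1 x hx y hy
    rwa [mul_one] at h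
end

section
/- Let X be a topological space, V and W finite-dimensional real vector spaces, π : V → W a surjective linear map, and A : X → End(V), B : X → End(W) continuous maps satisfying π∘A(x) = B(x)∘π for every x ∈ X. If for some x₀ ∈ X the function x ↦ dim V¹(A(x)) is constant on a neighbourhood of x₀, then the function x ↦ dim W¹(B(x)) is constant on a neighbourhood of x₀. -/
/-!
Write `V¹`, `W¹` for the generalized eigenspaces of `A x`, `B x` at `1`, and `K = ker π`.
By the Fitting decomposition of `A x - 1`, the map `π` sends `V¹` onto `W¹`, and the kernel of
this restriction is `K ∩ V¹`; hence `dim V¹ = dim W¹ + dim (K ∩ V¹)`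
(`finrank_maxGenEigenspace_quotient`). With `N = dim V`, both `W¹` and `K ∩ V¹` are kernels of
linear maps depending continuously on `x`, namely `(B x - 1) ^ N` and `(A x - 1) ^ N` restricted
to `K`. Kernel dimensions are upper semicontinuous (`eventually_finrank_ker_le`), so neither summand
can exceed its value at `x₀` near `x₀`. As their sum is locally constant, both are.
-/

/-- Upper semicontinuity of the kernel dimension, from lower semicontinuity of the rank. -/
lemma eventually_finrank_ker_le {X E F : Type*} [TopologicalSpace X]
    [NormedAddCommGroup E] [NormedSpace ℝ E] [FiniteDimensional ℝ E]
    [NormedAddCommGroup F] [NormedSpace ℝ F]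
    (T : X → E →L[ℝ] F) (hT : Continuous T) (x₀ : X) :
    ∀ᶠ x in nhds x₀, Module.finrank ℝ (LinearMap.ker (T x : E →ₗ[ℝ] F)) ≤
      Module.finrank ℝ (LinearMap.ker (T x₀ : E →ₗ[ℝ] F)) := by
  have hopen := (isOpen_setOfPred_nat_le_rank (𝕜 := ℝ) (E := E) (F := F)
    (Module.finrank ℝ (LinearMap.range (T x₀ : E →ₗ[ℝ] F)))).preimage hT
  have hmem := hopen.mem_nhds (x := x₀) (by
    simp [LinearMap.rank, ← Module.finrank_eq_rank])
  filter_upwards [hmem] with x hx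
  have hx' : Module.finrank ℝ (LinearMap.range (T x₀ : E →ₗ[ℝ] F)) ≤
      Module.finrank ℝ (LinearMap.range (T x : E →ₗ[ℝ] F)) := by
    simpa [LinearMap.rank, ← Module.finrank_eq_rank] using hx
  have h1 := LinearMap.finrank_range_add_finrank_ker (T x : E →ₗ[ℝ] F)
  have h2 := LinearMap.finrank_range_add_finrank_ker (T x₀ : E →ₗ[ℝ] F)
  omega

lemma toLinearMap_sub_one_pow {E : Type*} [NormedAddCommGroup E] [NormedSpace ℝ E]
    (T : E →L[ℝ] E) (n : ℕ) :
    (((T - 1) ^ n : E →L[ℝ] E) : E →ₗ[ℝ] E) = ((T : E →ₗ[ℝ] E) - 1) ^ n :=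
  ContinuousLinearMap.toLinearMap_pow (T - 1) n

lemma maxGenEigenspace_one_eq_ker {V : Type*} [AddCommGroup V] [Module ℝ V]
    [FiniteDimensional ℝ V] (f : Module.End ℝ V) {N : ℕ} (hN : Module.finrank ℝ V ≤ N) :
    f.maxGenEigenspace 1 = LinearMap.ker ((f - 1) ^ N) := by
  rw [Module.End.maxGenEigenspace_eq_genEigenspace_finrank,
    ← Module.End.genEigenspace_eq_genEigenspace_finrank_of_le f 1 hN,
    Module.End.genEigenspace_nat, one_smul]

lemma semiconj_sub_one_pow {V W : Type*} [AddCommGroup V] [Module ℝ V]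
    [AddCommGroup W] [Module ℝ W] (π : V →ₗ[ℝ] W) (f : Module.End ℝ V) (g : Module.End ℝ W)
    (h : π ∘ₗ f = g ∘ₗ π) (n : ℕ) (v : V) :
    π (((f - 1) ^ n) v) = ((g - 1) ^ n) (π v) := by
  induction n generalizing v with
  | zero => simp
  | succ n ih =>
    have hv : π (f v) = g (π v) := LinearMap.congr_fun h v
    rw [pow_succ, pow_succ, Module.End.mul_apply, Module.End.mul_apply, ih]
    simp [hv]

lemma map_maxGenEigenspace_one {V W : Type*} [AddCommGroup V] [Module ℝ V]
    [FiniteDimensional ℝ V] [AddCommGroup W] [Module ℝ W] [FiniteDimensional ℝ W]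
    (π : V →ₗ[ℝ] W) (hπ : Function.Surjective π)
    (f : Module.End ℝ V) (g : Module.End ℝ W) (h : π ∘ₗ f = g ∘ₗ π) :
    (f.maxGenEigenspace 1).map π = g.maxGenEigenspace 1 := by
  obtain ⟨n, ⟨hf, hg⟩, hnV, hnW⟩ := ((f - 1).eventually_isCompl_ker_pow_range_pow.and
    (g - 1).eventually_isCompl_ker_pow_range_pow |>.and
    ((Filter.eventually_ge_atTop (Module.finrank ℝ V)).and
      (Filter.eventually_ge_atTop (Module.finrank ℝ W)))).exists
  rw [maxGenEigenspace_one_eq_ker f hnV, maxGenEigenspace_one_eq_ker g hnW]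
  apply le_antisymm
  · rintro _ ⟨v, hv, rfl⟩
    rw [LinearMap.mem_ker, ← semiconj_sub_one_pow π f g h, LinearMap.mem_ker.1 hv, map_zero]
  · intro w hw
    obtain ⟨v, rfl⟩ := hπ w
    -- Decompose a lift `v` of `w`; the image of its range part lies in both Fitting summands of `g`.
    obtain ⟨a, ha, _, ⟨u, rfl⟩, rfl⟩ := Submodule.mem_sup.1
      (hf.sup_eq_top ▸ Submodule.mem_top : v ∈ _ ⊔ _)
    refine ⟨a, ha, ?_⟩
    have hπa : π a ∈ LinearMap.ker ((g - 1) ^ n) := by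
      rw [LinearMap.mem_ker, ← semiconj_sub_one_pow π f g h, LinearMap.mem_ker.1 ha, map_zero]
    rw [map_add] at hw ⊢
    have hker := (Submodule.add_mem_iff_right _ hπa).1 hw
    have hzero : π (((f - 1) ^ n) u) = 0 :=
      Submodule.disjoint_def.1 hg.disjoint _ hker
        ⟨π u, (semiconj_sub_one_pow π f g h n u).symm⟩
    rw [hzero, add_zero]

/-- Additivity of `dim V¹` along `0 → ker π → V → W → 0`. The summand of `ker π` is written as the
kernel of `(f - 1) ^ N` restricted to `ker π`. -/
lemma finrank_maxGenEigenspace_quotient {V W : Type*} [AddCommGroup V] [Module ℝ V]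
    [FiniteDimensional ℝ V] [AddCommGroup W] [Module ℝ W] [FiniteDimensional ℝ W]
    (π : V →ₗ[ℝ] W) (hπ : Function.Surjective π)
    (f : Module.End ℝ V) (g : Module.End ℝ W) (h : π ∘ₗ f = g ∘ₗ π)
    {N : ℕ} (hN : Module.finrank ℝ V ≤ N) :
    Module.finrank ℝ (f.maxGenEigenspace 1) = Module.finrank ℝ (g.maxGenEigenspace 1) +
      Module.finrank ℝ (LinearMap.ker (((f - 1) ^ N) ∘ₗ (LinearMap.ker π).subtype)) := by
  have hrn := LinearMap.finrank_range_add_finrank_ker (π.domRestrict (f.maxGenEigenspace 1))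
  rw [LinearMap.range_domRestrict, map_maxGenEigenspace_one π hπ f g h] at hrn
  rw [← hrn, add_right_inj, ← Submodule.finrank_map_subtype_eq,
    ← Submodule.finrank_map_subtype_eq (LinearMap.ker π), LinearMap.ker_domRestrict,
    LinearMap.ker_comp, Submodule.map_comap_subtype, Submodule.map_comap_subtype,
    maxGenEigenspace_one_eq_ker f hN, inf_comm]

/-- Let `π : V → W` be a surjective linear map of finite-dimensional real
vector spaces and `A : X → End(V)`, `B : X → End(W)` continuous families with
`π ∘ A(x) = B(x) ∘ π`.  If `x ↦ dim V¹(A(x))` is constant near `x₀`, then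
`x ↦ dim W¹(B(x))` is constant near `x₀`. -/
theorem dim_genEigenspace_one_locally_constant_quotient {X V W : Type*} [TopologicalSpace X]
    [NormedAddCommGroup V] [NormedSpace ℝ V] [FiniteDimensional ℝ V]
    [NormedAddCommGroup W] [NormedSpace ℝ W] [FiniteDimensional ℝ W]
    (π : V →ₗ[ℝ] W) (hπ : Function.Surjective π)
    (A : X → V →L[ℝ] V) (hA : Continuous A)
    (B : X → W →L[ℝ] W) (hB : Continuous B)
    (hcomm : ∀ x : X, π ∘ₗ ((A x : V →ₗ[ℝ] V)) = ((B x : W →ₗ[ℝ] W)) ∘ₗ π)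
    (x₀ : X)
    (hconst : ∃ U ∈ nhds x₀, ∀ x ∈ U,
      Module.finrank ℝ (Module.End.maxGenEigenspace ((A x : V →ₗ[ℝ] V)) 1) =
        Module.finrank ℝ (Module.End.maxGenEigenspace ((A x₀ : V →ₗ[ℝ] V)) 1)) :
    ∃ U ∈ nhds x₀, ∀ x ∈ U,
      Module.finrank ℝ (Module.End.maxGenEigenspace ((B x : W →ₗ[ℝ] W)) 1) =
        Module.finrank ℝ (Module.End.maxGenEigenspace ((B x₀ : W →ₗ[ℝ] W)) 1) := by
  have hNW : Module.finrank ℝ W ≤ Module.finrank ℝ V :=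
    LinearMap.finrank_le_finrank_of_surjective hπ
  have hW := eventually_finrank_ker_le (fun x => (B x - 1) ^ Module.finrank ℝ V)
    ((hB.sub continuous_const).pow _) x₀
  have hK := eventually_finrank_ker_le
    (fun x => ((A x - 1) ^ Module.finrank ℝ V).comp (LinearMap.ker π).subtypeL)
    (((hA.sub continuous_const).pow _).clm_comp continuous_const) x₀
  obtain ⟨U, hU, hUconst⟩ := hconst
  refine Filter.eventually_iff_exists_mem.1 ?_
  filter_upwards [hW, hK, hU] with x hWx hKx hxU
  have hsum := fun y => finrank_maxGenEigenspace_quotient π hπ _ _ (hcomm y) le_rfl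
  have hx := hsum x
  have hx₀ := hsum x₀
  have hBker := fun y => maxGenEigenspace_one_eq_ker (B y : W →ₗ[ℝ] W) hNW
  have hc := hUconst x hxU
  have hWle : Module.finrank ℝ (Module.End.maxGenEigenspace (B x : W →ₗ[ℝ] W) 1) ≤
      Module.finrank ℝ (Module.End.maxGenEigenspace (B x₀ : W →ₗ[ℝ] W) 1) := by
    rw [hBker x, hBker x₀, ← toLinearMap_sub_one_pow, ← toLinearMap_sub_one_pow]
    exact hWx
  have hKle : Module.finrank ℝ (LinearMap.ker
        ((((A x : V →ₗ[ℝ] V) - 1) ^ Module.finrank ℝ V) ∘ₗ (LinearMap.ker π).subtype)) ≤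
      Module.finrank ℝ (LinearMap.ker
        ((((A x₀ : V →ₗ[ℝ] V) - 1) ^ Module.finrank ℝ V) ∘ₗ (LinearMap.ker π).subtype)) := by
    rw [← toLinearMap_sub_one_pow, ← toLinearMap_sub_one_pow]
    exact hKx
  omega
end

section
/- Let X be a topological space, V and W finite-dimensional real vector spaces, π : V → W a surjective linear map, and A : X → End(V), B : X → End(W) continuous maps satisfying π∘A(x) = B(x)∘π for every x ∈ X. Assume moreover that for every x ∈ X the endomorphism A(x) fixes ker(π) pointwise (A(x)v = v for all v ∈ ker π). Then: (i) for every x ∈ X, dim V¹(A(x)) = dim ker(π) + dim W¹(B(x)); and (ii) for every x₀ ∈ X, the function x ↦ dim V¹(A(x)) is constant on a neighbourhood of x₀ if and only if the function x ↦ dim W¹(B(x)) is constant on a neighbourhood of x₀. -/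
/-!
The key point is that `V¹(A(x))` is the full preimage `π⁻¹(W¹(B(x)))`. Indeed `π` intertwines
`(A - 1)^k` and `(B - 1)^k`, so `π` maps `V¹(A)` into `W¹(B)`; conversely, if `(B - 1)^k (π v) = 0`
then `(A - 1)^k v` lies in `ker π`, which `A - 1` annihilates, so `(A - 1)^(k+1) v = 0`.
As `π` is surjective, rank-nullity for `π` restricted to this preimage gives the dimension formula.
The two dimension functions thus differ by the constant `dim ker π`, so one is locally constant
at a point exactly when the other is.
-/

open Module

lemma maxGenEigenspace_one_eq_comap {V W : Type*} [AddCommGroup V] [Module ℝ V]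
    [AddCommGroup W] [Module ℝ W] (π : V →ₗ[ℝ] W) (a : End ℝ V) (b : End ℝ W)
    (hcomm : π ∘ₗ a = b ∘ₗ π) (hfix : ∀ v ∈ LinearMap.ker π, a v = v) :
    a.maxGenEigenspace 1 = (b.maxGenEigenspace 1).comap π := by
  have hstep : ∀ v, π ((a - 1) v) = (b - 1) (π v) := fun v => by
    have := LinearMap.congr_fun hcomm v
    simp only [LinearMap.comp_apply] at this
    simp [this]
  have hpow : ∀ (k : ℕ) (v : V), π (((a - 1) ^ k) v) = ((b - 1) ^ k) (π v) := by
    intro k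
    induction k with
    | zero => simp
    | succ k ih => intro v; rw [pow_succ, pow_succ, End.mul_apply, End.mul_apply, ih, hstep]
  ext v
  simp only [Submodule.mem_comap, End.mem_maxGenEigenspace, one_smul]
  constructor
  · rintro ⟨k, hk⟩
    exact ⟨k, by rw [← hpow, hk, map_zero]⟩
  · rintro ⟨k, hk⟩
    refine ⟨k + 1, ?_⟩
    rw [pow_succ', End.mul_apply, LinearMap.sub_apply, End.one_apply, sub_eq_zero]
    exact hfix _ (by rw [LinearMap.mem_ker, hpow, hk])

lemma finrank_comap_of_surjective {V W : Type*} [AddCommGroup V] [Module ℝ V]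
    [FiniteDimensional ℝ V] [AddCommGroup W] [Module ℝ W] (π : V →ₗ[ℝ] W)
    (hπ : Function.Surjective π) (P : Submodule ℝ W) :
    finrank ℝ (P.comap π) = finrank ℝ (LinearMap.ker π) + finrank ℝ P := by
  have h := LinearMap.finrank_range_add_finrank_ker (π.domRestrict (P.comap π))
  rw [LinearMap.range_domRestrict, Submodule.map_comap_eq_of_surjective hπ,
    LinearMap.ker_domRestrict,
    (Submodule.comapSubtypeEquivOfLe (LinearMap.ker_le_comap π)).finrank_eq] at h
  omega

/-- Let `π : V → W` be a surjective linear map of finite-dimensional real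
vector spaces and `A : X → End(V)`, `B : X → End(W)` continuous families with
`π ∘ A(x) = B(x) ∘ π`, such that each `A(x)` fixes `ker π` pointwise.  Then
(i) `dim V¹(A(x)) = dim ker π + dim W¹(B(x))` for all `x`, and (ii) `x ↦ dim V¹(A(x))` is
constant near `x₀` iff `x ↦ dim W¹(B(x))` is constant near `x₀`. -/
theorem dim_genEigenspace_one_central_quotient {X V W : Type*} [TopologicalSpace X]
    [NormedAddCommGroup V] [NormedSpace ℝ V] [FiniteDimensional ℝ V]
    [NormedAddCommGroup W] [NormedSpace ℝ W] [FiniteDimensional ℝ W]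
    (π : V →ₗ[ℝ] W) (hπ : Function.Surjective π)
    (A : X → V →L[ℝ] V) (hA : Continuous A)
    (B : X → W →L[ℝ] W) (hB : Continuous B)
    (hcomm : ∀ x : X, π ∘ₗ ((A x : V →ₗ[ℝ] V)) = ((B x : W →ₗ[ℝ] W)) ∘ₗ π)
    (hfix : ∀ (x : X), ∀ v ∈ LinearMap.ker π, A x v = v) :
    (∀ x : X,
      Module.finrank ℝ (Module.End.maxGenEigenspace ((A x : V →ₗ[ℝ] V)) 1) =
        Module.finrank ℝ (LinearMap.ker π) +
          Module.finrank ℝ (Module.End.maxGenEigenspace ((B x : W →ₗ[ℝ] W)) 1)) ∧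
    ∀ x₀ : X,
      ((∃ U ∈ nhds x₀, ∀ x ∈ U,
          Module.finrank ℝ (Module.End.maxGenEigenspace ((A x : V →ₗ[ℝ] V)) 1) =
            Module.finrank ℝ (Module.End.maxGenEigenspace ((A x₀ : V →ₗ[ℝ] V)) 1)) ↔
        (∃ U ∈ nhds x₀, ∀ x ∈ U,
          Module.finrank ℝ (Module.End.maxGenEigenspace ((B x : W →ₗ[ℝ] W)) 1) =
            Module.finrank ℝ (Module.End.maxGenEigenspace ((B x₀ : W →ₗ[ℝ] W)) 1))) := by
  have key : ∀ x : X,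
      finrank ℝ (End.maxGenEigenspace (A x : V →ₗ[ℝ] V) 1) =
        finrank ℝ (LinearMap.ker π) + finrank ℝ (End.maxGenEigenspace (B x : W →ₗ[ℝ] W) 1) :=
    fun x => by
      rw [maxGenEigenspace_one_eq_comap π _ _ (hcomm x) (hfix x),
        finrank_comap_of_surjective π hπ]
  refine ⟨key, fun x₀ => ?_⟩
  simp only [key, Nat.add_left_cancel_iff]
end
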